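/- The Nielsen class Ni(A6, C_{2×2}^5) is nonempty, and any two of its elements are related by the equivalence relation generated by the Hurwitz moves together with simultaneous conjugation of all entries by a single element of the symmetric group S6; that is, the corresponding quotient has exactly one equivalence class. -/

import Mathlib

/-- The `i`-th Hurwitz move on `k`-tuples of elements of a group `G`:
`(g₁,…,gₖ) ↦ (g₁,…,g_{i-1}, g_{i+1}, g_{i+1}⁻¹ g_i g_{i+1}, g_{i+2},…,gₖ)`. -/
def HurwitzMove {G : Type*} [Group G] {k : ℕ} (g h : Fin k → G) : Prop :=
  ∃ i : ℕ, ∃ hi : i + 1 < k,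
    h ⟨i, Nat.lt_of_succ_lt hi⟩ = g ⟨i + 1, hi⟩ ∧
    h ⟨i + 1, hi⟩ = (g ⟨i + 1, hi⟩)⁻¹ * g ⟨i, Nat.lt_of_succ_lt hi⟩ * g ⟨i + 1, hi⟩ ∧
    ∀ j : Fin k, (j : ℕ) ≠ i → (j : ℕ) ≠ i + 1 → h j = g j

/-- Hurwitz equivalence: the equivalence relation generated by the Hurwitz moves. -/
def HurwitzEquiv {G : Type*} [Group G] {k : ℕ} (g h : Fin k → G) : Prop :=
  Relation.EqvGen HurwitzMove g h

/-- The Nielsen class `Ni(A₆, C_{2×2}^k)`: `k`-tuples of order-2 elements of `A₆`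
(products of two disjoint transpositions) with product `1` generating `A₆`. -/
def NielsenSet (k : ℕ) : Set (Fin k → Equiv.Perm (Fin 6)) :=
  {g | (∀ i, g i ∈ alternatingGroup (Fin 6)) ∧ (∀ i, orderOf (g i) = 2) ∧
       (List.ofFn g).prod = 1 ∧
       Subgroup.closure (Set.range g) = alternatingGroup (Fin 6)}

/-- One step of the absolute equivalence: a Hurwitz move, or simultaneous
conjugation of all entries by a single element of `S₆`. -/
def AbsRel (k : ℕ) (g h : Fin k → Equiv.Perm (Fin 6)) : Prop :=
  HurwitzMove g h ∨ ∃ s : Equiv.Perm (Fin 6), h = fun i => s⁻¹ * g i * s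

/-- One step of the inner equivalence: a Hurwitz move, or simultaneous
conjugation of all entries by a single element of `A₆`. -/
def InnerRel (k : ℕ) (g h : Fin k → Equiv.Perm (Fin 6)) : Prop :=
  HurwitzMove g h ∨
    ∃ s ∈ alternatingGroup (Fin 6), h = fun i => s⁻¹ * g i * s

/-- The set of fixed points of a permutation. -/
def FixedPts {n : ℕ} (g : Equiv.Perm (Fin n)) : Set (Fin n) := {x | g x = x}

/-!
Hurwitz moves bring any two entries of a tuple to adjacent positions, and two consecutive moves at
one place conjugate a pair of neighbours by its product. A tuple in the Nielsen class contains two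
entries whose product is a 5-cycle: otherwise its first four entries, hence all of them, commute
with an odd involution, and no odd involution centralizes `A₆`. All such pairs are conjugate in
`S₆`, so one can be moved to the front and normalized to `(a₀, b₀)`; among the remaining three
entries, which have the 5-cycle `(a₀ b₀)⁻¹` as product, a second such pair appears after at most
one more move. Conjugating by the two 5-cycles leaves four tuples. One of them fixes a letter and
one lies in an exotic `S₅`, so these do not generate `A₆`; the other two are equivalent.
-/

open Equiv Equiv.Perm Relation

section Hurwitz

variable {G : Type*} [Group G] {k : ℕ} {g h : Fin k → G}

/-- The tuple obtained from `g` by the Hurwitz move at the positions `i` and `i + 1`. -/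
def braid (g : Fin k → G) (i : ℕ) (hi : i + 1 < k) : Fin k → G :=
  Function.update (Function.update g ⟨i + 1, hi⟩
    ((g ⟨i + 1, hi⟩)⁻¹ * g ⟨i, Nat.lt_of_succ_lt hi⟩ * g ⟨i + 1, hi⟩))
    ⟨i, Nat.lt_of_succ_lt hi⟩ (g ⟨i + 1, hi⟩)

@[simp]
lemma braid_self (g : Fin k → G) (i : ℕ) (hi : i + 1 < k) :
    braid g i hi ⟨i, Nat.lt_of_succ_lt hi⟩ = g ⟨i + 1, hi⟩ := by
  simp [braid]

@[simp]
lemma braid_succ (g : Fin k → G) (i : ℕ) (hi : i + 1 < k) :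
    braid g i hi ⟨i + 1, hi⟩ =
      (g ⟨i + 1, hi⟩)⁻¹ * g ⟨i, Nat.lt_of_succ_lt hi⟩ * g ⟨i + 1, hi⟩ := by
  simp [braid]

lemma braid_of_ne (g : Fin k → G) {i : ℕ} (hi : i + 1 < k) {j : Fin k} (h₀ : (j : ℕ) ≠ i)
    (h₁ : (j : ℕ) ≠ i + 1) : braid g i hi j = g j := by
  simp [braid, Fin.ext_iff, h₀, h₁]

lemma hurwitzMove_braid (g : Fin k → G) (i : ℕ) (hi : i + 1 < k) : HurwitzMove g (braid g i hi) :=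
  ⟨i, hi, braid_self g i hi, braid_succ g i hi, fun _ h₀ h₁ => braid_of_ne g hi h₀ h₁⟩

lemma HurwitzMove.prod_ofFn_eq {k : ℕ} {g h : Fin k → G} (hgh : HurwitzMove g h) :
    (List.ofFn h).prod = (List.ofFn g).prod := by
  induction k with
  | zero => exact absurd hgh.choose_spec.choose (Nat.not_lt_zero _)
  | succ k ih =>
    obtain ⟨i, hi, h₀, h₁, h_ne⟩ := hgh
    cases i with
    | zero =>
      obtain ⟨k, rfl⟩ : ∃ m, k = m + 1 := ⟨k - 1, by lia⟩
      have h_tail (j : Fin k) : h j.succ.succ = g j.succ.succ :=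
        h_ne _ (by simp) (by simp)
      change h 0 = g 1 at h₀
      change h 1 = (g 1)⁻¹ * g 0 * g 1 at h₁
      simp [List.ofFn_succ, h_tail, h₀, h₁, mul_assoc]
    | succ i =>
      have h_head : h 0 = g 0 := h_ne 0 (by simp) (by simp)
      have h_tail : HurwitzMove (fun j => g (Fin.succ j)) fun j => h (Fin.succ j) :=
        ⟨i, Nat.lt_of_succ_lt_succ hi, h₀, h₁, fun j hj₀ hj₁ =>
          h_ne j.succ (by simpa using hj₀) (by simpa using hj₁)⟩
      rw [List.ofFn_succ, List.ofFn_succ, List.prod_cons, List.prod_cons, h_head, ih h_tail]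

lemma HurwitzMove.exists_isConj (hgh : HurwitzMove g h) (j : Fin k) :
    ∃ l, IsConj (g l) (h j) := by
  obtain ⟨i, hi, h₀, h₁, h_ne⟩ := hgh
  by_cases hj₀ : (j : ℕ) = i
  · obtain rfl : j = ⟨i, Nat.lt_of_succ_lt hi⟩ := Fin.ext hj₀
    exact ⟨⟨i + 1, hi⟩, h₀ ▸ .refl _⟩
  by_cases hj₁ : (j : ℕ) = i + 1
  · obtain rfl : j = ⟨i + 1, hi⟩ := Fin.ext hj₁
    exact ⟨⟨i, Nat.lt_of_succ_lt hi⟩, isConj_iff.mpr ⟨(g ⟨i + 1, hi⟩)⁻¹, by rw [h₁, inv_inv]⟩⟩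
  · exact ⟨j, h_ne j hj₀ hj₁ ▸ .refl _⟩

lemma HurwitzMove.closure_range_eq (hgh : HurwitzMove g h) :
    Subgroup.closure (Set.range h) = Subgroup.closure (Set.range g) := by
  obtain ⟨i, hi, h₀, h₁, h_ne⟩ := hgh
  have mem_range (f : Fin k → G) (j : Fin k) : f j ∈ Subgroup.closure (Set.range f) :=
    Subgroup.subset_closure ⟨j, rfl⟩
  apply le_antisymm <;> rw [Subgroup.closure_le] <;> rintro _ ⟨j, rfl⟩
  · by_cases hj₀ : (j : ℕ) = i
    · obtain rfl : j = ⟨i, Nat.lt_of_succ_lt hi⟩ := Fin.ext hj₀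
      rw [h₀]
      exact mem_range g _
    by_cases hj₁ : (j : ℕ) = i + 1
    · obtain rfl : j = ⟨i + 1, hi⟩ := Fin.ext hj₁
      rw [h₁]
      exact mul_mem (mul_mem (inv_mem (mem_range g _)) (mem_range g _)) (mem_range g _)
    · rw [h_ne j hj₀ hj₁]
      exact mem_range g _
  · by_cases hj₀ : (j : ℕ) = i
    · obtain rfl : j = ⟨i, Nat.lt_of_succ_lt hi⟩ := Fin.ext hj₀
      have h_inv : g ⟨i, Nat.lt_of_succ_lt hi⟩ = h ⟨i, Nat.lt_of_succ_lt hi⟩ * h ⟨i + 1, hi⟩ *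
          (h ⟨i, Nat.lt_of_succ_lt hi⟩)⁻¹ := by
        rw [h₀, h₁]
        group
      rw [h_inv]
      exact mul_mem (mul_mem (mem_range h _) (mem_range h _)) (inv_mem (mem_range h _))
    by_cases hj₁ : (j : ℕ) = i + 1
    · obtain rfl : j = ⟨i + 1, hi⟩ := Fin.ext hj₁
      rw [← h₀]
      exact mem_range h _
    · rw [← h_ne j hj₀ hj₁]
      exact mem_range h _

lemma exists_reflTransGen_hurwitzMove_apply_eq (g : Fin k → G) {m i : ℕ} (hmi : m ≤ i)
    (hi : i < k) : ∃ h, ReflTransGen HurwitzMove g h ∧ h ⟨m, hmi.trans_lt hi⟩ = g ⟨i, hi⟩ ∧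
      ∀ j : Fin k, (j : ℕ) < m ∨ i < j → h j = g j := by
  induction i, hmi using Nat.le_induction generalizing g with
  | base => exact ⟨g, .refl, rfl, fun _ _ => rfl⟩
  | succ i hmi ih =>
    obtain ⟨h, hgh, hm, h_eq⟩ := ih (braid g i hi) (Nat.lt_of_succ_lt hi)
    refine ⟨h, .head (hurwitzMove_braid g i hi) hgh, by rw [hm, braid_self], fun j hj => ?_⟩
    rw [h_eq j (by lia), braid_of_ne g hi (by lia) (by lia)]

lemma exists_reflTransGen_hurwitzMove_apply_eq_pair (g : Fin k → G) {m i j : ℕ} (hmi : m ≤ i)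
    (hij : i < j) (hj : j < k) : ∃ h, ReflTransGen HurwitzMove g h ∧
      h ⟨m, by lia⟩ = g ⟨i, hij.trans hj⟩ ∧ h ⟨m + 1, by lia⟩ = g ⟨j, hj⟩ ∧
      ∀ l : Fin k, (l : ℕ) < m → h l = g l := by
  obtain ⟨h, hgh, hm, h_eq⟩ := exists_reflTransGen_hurwitzMove_apply_eq g hmi (hij.trans hj)
  obtain ⟨f, hhf, hm', f_eq⟩ :=
    exists_reflTransGen_hurwitzMove_apply_eq h (m := m + 1) (by lia) hj
  refine ⟨f, hgh.trans hhf, ?_, ?_, fun l hl => ?_⟩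
  · rw [f_eq _ (.inl m.lt_succ_self), hm]
  · rw [hm', h_eq _ (.inr hij)]
  · rw [f_eq l (.inl (by lia)), h_eq l (.inl hl)]

lemma braid_braid (g : Fin k → G) (i : ℕ) (hi : i + 1 < k) (j : Fin k) :
    braid (braid g i hi) i hi j = if (j : ℕ) = i ∨ (j : ℕ) = i + 1 then
      (g ⟨i, Nat.lt_of_succ_lt hi⟩ * g ⟨i + 1, hi⟩)⁻¹ * g j *
        (g ⟨i, Nat.lt_of_succ_lt hi⟩ * g ⟨i + 1, hi⟩) else g j := by
  by_cases hj₀ : (j : ℕ) = i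
  · obtain rfl : j = ⟨i, Nat.lt_of_succ_lt hi⟩ := Fin.ext hj₀
    simp [mul_assoc]
  by_cases hj₁ : (j : ℕ) = i + 1
  · obtain rfl : j = ⟨i + 1, hi⟩ := Fin.ext hj₁
    simp [mul_assoc]
  · rw [braid_of_ne _ hi hj₀ hj₁, braid_of_ne _ hi hj₀ hj₁, if_neg (by lia)]

end Hurwitz

section Nielsen

variable {k : ℕ} {g h : Fin k → Perm (Fin 6)}

lemma prod_ofFn_conj {G : Type*} [Group G] (g : Fin k → G) (s : G) :
    (List.ofFn fun i => s⁻¹ * g i * s).prod = s⁻¹ * (List.ofFn g).prod * s := by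
  have := map_list_prod (MulAut.conj s⁻¹) (List.ofFn g)
  rw [List.map_ofFn] at this
  simpa [Function.comp_def] using this.symm

lemma closure_range_conj_eq_of_normal {G : Type*} [Group G] (g : Fin k → G) {N : Subgroup G}
    [N.Normal] (hg : Subgroup.closure (Set.range g) = N) (s : G) :
    Subgroup.closure (Set.range fun i => s⁻¹ * g i * s) = N := by
  have h_range : (Set.range fun i => s⁻¹ * g i * s) = MulAut.conj s⁻¹ '' Set.range g := by
    rw [← Set.range_comp]
    simp [Function.comp_def]
  rw [h_range, ← MonoidHom.coe_coe, ← MonoidHom.map_closure, hg]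
  exact Subgroup.Normal.map_conj_eq N s⁻¹

lemma AbsRel.exists_isConj (hgh : AbsRel k g h) (j : Fin k) : ∃ l, IsConj (g l) (h j) := by
  obtain hgh | ⟨s, rfl⟩ := hgh
  · exact hgh.exists_isConj j
  · exact ⟨j, isConj_iff.mpr ⟨s⁻¹, by rw [inv_inv]⟩⟩

lemma AbsRel.mem_nielsenSet (hgh : AbsRel k g h) (hg : g ∈ NielsenSet k) : h ∈ NielsenSet k := by
  obtain ⟨h_even, h_order, h_prod, h_gen⟩ := hg
  refine ⟨fun j => ?_, fun j => ?_, ?_, ?_⟩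
  · obtain ⟨l, hl⟩ := hgh.exists_isConj j
    obtain ⟨s, hs⟩ := isConj_iff.mp hl
    exact hs ▸ Subgroup.Normal.conj_mem inferInstance _ (h_even l) s
  · obtain ⟨l, hl⟩ := hgh.exists_isConj j
    obtain ⟨s, hs⟩ := isConj_iff.mp hl
    rw [← hs, ← h_order l]
    exact (MulAut.conj s).orderOf_eq (g l)
  · obtain hgh | ⟨s, rfl⟩ := hgh
    · rw [hgh.prod_ofFn_eq, h_prod]
    · rw [prod_ofFn_conj, h_prod, mul_one, inv_mul_cancel]
  · obtain hgh | ⟨s, rfl⟩ := hgh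
    · rw [hgh.closure_range_eq, h_gen]
    · exact closure_range_conj_eq_of_normal g h_gen s

lemma mem_nielsenSet_of_reflTransGen (hgh : ReflTransGen (AbsRel k) g h) (hg : g ∈ NielsenSet k) :
    h ∈ NielsenSet k := by
  induction hgh with
  | refl => exact hg
  | tail _ hstep ih => exact hstep.mem_nielsenSet ih

lemma alternatingGroup_le_of_mem_nielsenSet (hg : g ∈ NielsenSet k) {H : Subgroup (Perm (Fin 6))}
    (hH : ∀ i, g i ∈ H) : alternatingGroup (Fin 6) ≤ H := by
  rw [← hg.2.2.2, Subgroup.closure_le]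
  exact Set.range_subset_iff.mpr hH

end Nielsen

section DoubleTranspositions

/-- The double transpositions `(a b)(c d)` of six letters, each written once, with `a < b` and
`a < c < d`. -/
def doubleTranspositions : List (Perm (Fin 6)) :=
  (List.finRange 6).flatMap fun a => ((List.finRange 6).filter (a < ·)).flatMap fun b =>
    ((List.finRange 6).filter fun c => a < c ∧ c ≠ b).flatMap fun c =>
      ((List.finRange 6).filter fun d => c < d ∧ d ≠ b).map fun d => swap a b * swap c d

/-- Two double transpositions are opposite when their product is a 5-cycle, which happens exactly
when they agree at a single letter. (A double transposition is a flag of the generalized quadrangle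
formed by the transpositions and the triple transpositions of `S₆`; the name refers to opposite
flags.) -/
def IsOpposite (a b : Perm (Fin 6)) : Prop :=
  (Finset.univ.filter fun x => a x = b x).card = 1

instance : DecidableRel IsOpposite := fun _ _ => inferInstanceAs (Decidable (_ = _))

-- Without this instance `decide` would let `x` range over all of `S₆` instead of over `l`.
local instance decidableForallMemList {α : Type*} (l : List α) (p : α → Prop) [DecidablePred p] :
    Decidable (∀ x ∈ l, p x) :=
  List.decidableBAll p l

/-- The first entry of the reference opposite pair. -/
def a₀ : Perm (Fin 6) := swap 0 1 * swap 2 3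

/-- The second entry of the reference opposite pair. -/
def b₀ : Perm (Fin 6) := swap 1 2 * swap 3 4

/-- Representatives of the orbits of the centralizer of `a₀` in `S₆` on the double
transpositions. -/
def centralizerRepresentatives : List (Perm (Fin 6)) :=
  [a₀, b₀, swap 0 1 * swap 4 5, swap 0 4 * swap 1 5, swap 0 2 * swap 4 5, swap 0 4 * swap 2 5,
   swap 0 1 * swap 2 4, swap 0 2 * swap 1 3]

/-- The odd involutions of `S₆` commuting with `a₀`. -/
def commutingOddInvolutions : List (Perm (Fin 6)) :=
  [swap 0 1, swap 2 3, swap 4 5, swap 0 1 * swap 2 3 * swap 4 5,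
   swap 0 2 * swap 1 3 * swap 4 5, swap 0 3 * swap 1 2 * swap 4 5]

/-- Representatives of the opposite pairs `(c, d)` for which `a₀ * b₀ * c * d` is a double
transposition, up to conjugation by `a₀ * b₀` and by `c * d`. -/
def pairRepresentatives : List (Perm (Fin 6) × Perm (Fin 6)) :=
  [(swap 1 2 * swap 3 5, swap 0 1 * swap 2 5), (swap 1 2 * swap 4 5, swap 0 1 * swap 2 4),
   (swap 1 2 * swap 3 4, swap 0 2 * swap 1 3), (swap 1 2 * swap 3 4, swap 2 3 * swap 4 5)]

lemma mem_doubleTranspositions_of_sq_eq_one :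
    ∀ p : Perm (Fin 6), p * p = 1 → p ≠ 1 → sign p = 1 → p ∈ doubleTranspositions := by
  decide +kernel

lemma sq_eq_one_of_mem_doubleTranspositions :
    ∀ p ∈ doubleTranspositions, p * p = 1 ∧ p ≠ 1 ∧ sign p = 1 := by
  decide +kernel

lemma mem_doubleTranspositions_iff {p : Perm (Fin 6)} :
    p ∈ doubleTranspositions ↔ p ∈ alternatingGroup (Fin 6) ∧ orderOf p = 2 := by
  rw [Equiv.Perm.mem_alternatingGroup, orderOf_eq_prime_iff, sq]
  refine ⟨fun hp => ?_, fun ⟨h_sign, h_sq, h_ne⟩ =>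
    mem_doubleTranspositions_of_sq_eq_one p h_sq h_ne h_sign⟩
  obtain ⟨h_sq, h_ne, h_sign⟩ := sq_eq_one_of_mem_doubleTranspositions p hp
  exact ⟨h_sign, h_sq, h_ne⟩

lemma conj_mem_doubleTranspositions {a : Perm (Fin 6)} (ha : a ∈ doubleTranspositions)
    (s : Perm (Fin 6)) : s⁻¹ * a * s ∈ doubleTranspositions := by
  rw [mem_doubleTranspositions_iff] at ha ⊢
  constructor
  · simpa using Subgroup.Normal.conj_mem inferInstance _ ha.1 s⁻¹
  · simpa using ((MulAut.conj s⁻¹).orderOf_eq a).trans ha.2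

lemma IsOpposite.of_conj {s a b : Perm (Fin 6)} (h : IsOpposite (s⁻¹ * a * s) (s⁻¹ * b * s)) :
    IsOpposite a b := by
  rw [IsOpposite, ← h]
  refine (Finset.card_equiv s fun x => ?_).symm
  simp

lemma exists_conj_eq_a₀ : ∀ a ∈ doubleTranspositions,
    ∃ s ∈ doubleTranspositions, ∃ t ∈ doubleTranspositions, a * (s * t) = s * t * a₀ := by
  decide +kernel

-- The four factors generate the centralizer of `a₀`, a group of order 16.
lemma exists_conj_mem_centralizerRepresentatives : ∀ b ∈ doubleTranspositions,
    ∃ i < 2, ∃ j < 2, ∃ k < 2, ∃ l < 2, ∃ r ∈ centralizerRepresentatives,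
      let s := swap 0 1 ^ i * swap 2 3 ^ j * (swap 0 2 * swap 1 3) ^ k * swap 4 5 ^ l
      a₀ * s = s * a₀ ∧ b * s = s * r := by
  decide +kernel

lemma exists_conj_eq_a₀_and_mem {a b : Perm (Fin 6)} (ha : a ∈ doubleTranspositions)
    (hb : b ∈ doubleTranspositions) :
    ∃ s, s⁻¹ * a * s = a₀ ∧ s⁻¹ * b * s ∈ centralizerRepresentatives := by
  obtain ⟨s, -, t, -, hst⟩ := exists_conj_eq_a₀ a ha
  obtain ⟨i, -, j, -, k, -, l, -, r, hr, ha₀, hbr⟩ :=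
    exists_conj_mem_centralizerRepresentatives _ (conj_mem_doubleTranspositions hb (s * t))
  set u : Perm (Fin 6) := swap 0 1 ^ i * swap 2 3 ^ j * (swap 0 2 * swap 1 3) ^ k * swap 4 5 ^ l
  have h_conj (x : Perm (Fin 6)) :
      (s * t * u)⁻¹ * x * (s * t * u) = u⁻¹ * ((s * t)⁻¹ * x * (s * t)) * u := by group
  refine ⟨s * t * u, ?_, ?_⟩
  · rw [h_conj, mul_assoc _ a, hst, inv_mul_cancel_left, mul_assoc, ha₀, inv_mul_cancel_left]
  · rwa [h_conj, mul_assoc u⁻¹, hbr, inv_mul_cancel_left]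

lemma eq_b₀_of_isOpposite : ∀ b ∈ centralizerRepresentatives, IsOpposite a₀ b → b = b₀ := by
  decide +kernel

lemma IsOpposite.exists_conj_eq {a b : Perm (Fin 6)} (h : IsOpposite a b)
    (ha : a ∈ doubleTranspositions) (hb : b ∈ doubleTranspositions) :
    ∃ s, s⁻¹ * a * s = a₀ ∧ s⁻¹ * b * s = b₀ := by
  obtain ⟨s, hs, hb'⟩ := exists_conj_eq_a₀_and_mem ha hb
  refine ⟨s, hs, eq_b₀_of_isOpposite _ hb' ?_⟩
  apply IsOpposite.of_conj (s := s⁻¹)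
  rw [← hs]
  convert h using 1 <;> group

lemma exists_mem_commutingOddInvolutions : ∀ b ∈ centralizerRepresentatives, ¬ IsOpposite a₀ b →
    ∀ c ∈ doubleTranspositions, ¬ IsOpposite a₀ c → ¬ IsOpposite b c →
    ∀ d ∈ doubleTranspositions, ¬ IsOpposite a₀ d → ¬ IsOpposite b d → ¬ IsOpposite c d →
    a₀ * b * c * d * (a₀ * b * c * d) = 1 → a₀ * b * c * d ≠ 1 →
    (∀ x ∈ [a₀, b, c, d], ¬ IsOpposite x (a₀ * b * c * d)) →
    ∃ t ∈ commutingOddInvolutions, ∀ x ∈ [a₀, b, c, d], x * t = t * x := by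
  decide +kernel

lemma mul_ne_mul_of_mem_commutingOddInvolutions :
    ∀ t ∈ commutingOddInvolutions, a₀ * b₀ * t ≠ t * (a₀ * b₀) := by
  decide +kernel

lemma a₀_mul_b₀_mem_alternatingGroup : a₀ * b₀ ∈ alternatingGroup (Fin 6) := by
  rw [Equiv.Perm.mem_alternatingGroup]
  decide +kernel

lemma exists_isOpposite_of_prod_involution : ∀ c ∈ doubleTranspositions,
    ∀ d ∈ doubleTranspositions, a₀ * b₀ * c * d * (a₀ * b₀ * c * d) = 1 →
    IsOpposite c d ∨ IsOpposite c (a₀ * b₀ * c * d) ∨ IsOpposite d (a₀ * b₀ * c * d) ∨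
      IsOpposite (d⁻¹ * c * d) (a₀ * b₀ * c * d) := by
  decide +kernel

lemma exists_pow_mul_eq_mul_pow : ∀ c ∈ doubleTranspositions, ∀ d ∈ doubleTranspositions,
    IsOpposite c d → a₀ * b₀ * c * d * (a₀ * b₀ * c * d) = 1 → a₀ * b₀ * c * d ≠ 1 →
    ∃ r ∈ pairRepresentatives, ∃ i < 5,
      (a₀ * b₀) ^ i * (c * d) = r.1 * r.2 * (a₀ * b₀) ^ i := by
  decide +kernel

-- The involutions inverting a 5-cycle `q` are permuted transitively by the powers of `q`.
lemma exists_mul_pow_eq_pow_mul : ∀ r ∈ pairRepresentatives, ∀ c ∈ doubleTranspositions,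
    c * (r.1 * r.2) * (c * (r.1 * r.2)) = 1 →
    ∃ i < 5, c * (r.1 * r.2) ^ i = (r.1 * r.2) ^ i * r.1 := by
  decide +kernel

end DoubleTranspositions

section NormalForm

/-- The five-tuple with product `1` whose first four entries are `a₀`, `b₀`, `c`, `d`. -/
def normalTuple (c d : Perm (Fin 6)) : Fin 5 → Perm (Fin 6) :=
  ![a₀, b₀, c, d, (a₀ * b₀ * c * d)⁻¹]

variable {g : Fin 5 → Perm (Fin 6)} {c d : Perm (Fin 6)}

lemma mem_doubleTranspositions_of_mem_nielsenSet {k : ℕ} {g : Fin k → Perm (Fin 6)}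
    (hg : g ∈ NielsenSet k) (i : Fin k) : g i ∈ doubleTranspositions :=
  mem_doubleTranspositions_iff.mpr ⟨hg.1 i, hg.2.1 i⟩

lemma apply_four_eq_of_mem_nielsenSet (hg : g ∈ NielsenSet 5) :
    g 4 = g 0 * g 1 * g 2 * g 3 := by
  obtain ⟨h_sq, -, -⟩ :=
    sq_eq_one_of_mem_doubleTranspositions _ (mem_doubleTranspositions_of_mem_nielsenSet hg 4)
  rw [eq_inv_of_mul_eq_one_left h_sq, eq_comm, eq_inv_iff_mul_eq_one]
  simpa [List.ofFn_succ, mul_assoc] using hg.2.2.1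

lemma eq_normalTuple (hg : g ∈ NielsenSet 5) (h₀ : g 0 = a₀) (h₁ : g 1 = b₀) :
    g = normalTuple (g 2) (g 3) := by
  have h_prod : a₀ * b₀ * g 2 * g 3 * g 4 = 1 := by
    simpa [List.ofFn_succ, mul_assoc, h₀, h₁] using hg.2.2.1
  ext1 i
  fin_cases i
  exacts [h₀, h₁, rfl, rfl, eq_inv_of_mul_eq_one_right h_prod]

lemma reflTransGen_conj_pow_left (c d : Perm (Fin 6)) (n : ℕ) :
    ReflTransGen (AbsRel 5) (normalTuple c d)
      (normalTuple ((a₀ * b₀) ^ n * c * ((a₀ * b₀) ^ n)⁻¹)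
        ((a₀ * b₀) ^ n * d * ((a₀ * b₀) ^ n)⁻¹)) := by
  induction n with
  | zero => simpa using ReflTransGen.refl
  | succ n ih =>
    refine ih.trans (.head (.inl (hurwitzMove_braid _ 0 (by lia))) (.head
      (.inl (hurwitzMove_braid _ 0 (by lia))) (.single (.inr ⟨(a₀ * b₀)⁻¹, ?_⟩))))
    ext1 i
    rw [braid_braid]
    fin_cases i <;> simp [normalTuple, pow_succ', mul_assoc]

lemma reflTransGen_conj_right (c d : Perm (Fin 6)) :
    ReflTransGen (AbsRel 5) (normalTuple c d)
      (normalTuple ((c * d)⁻¹ * c * (c * d)) ((c * d)⁻¹ * d * (c * d))) := by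
  have h_target : normalTuple ((c * d)⁻¹ * c * (c * d)) ((c * d)⁻¹ * d * (c * d)) =
      braid (braid (normalTuple c d) 2 (by lia)) 2 (by lia) := by
    ext1 i
    rw [braid_braid]
    fin_cases i <;> simp [normalTuple, mul_assoc]
  rw [h_target]
  exact .head (.inl (hurwitzMove_braid _ 2 _)) (.single (.inl (hurwitzMove_braid _ 2 _)))

lemma conj_mul_pow_mul_conj_mul_pow {G : Type*} [Group G] (c d : G) (n : ℕ) :
    ((c * d) ^ n)⁻¹ * c * (c * d) ^ n * (((c * d) ^ n)⁻¹ * d * (c * d) ^ n) = c * d := by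
  calc
    _ = ((c * d) ^ n)⁻¹ * ((c * d) * (c * d) ^ n) := by
      simp only [mul_assoc, mul_inv_cancel_left]
    _ = c * d := by rw [← pow_succ', pow_succ, inv_mul_cancel_left]

lemma reflTransGen_conj_pow_right (c d : Perm (Fin 6)) (n : ℕ) :
    ReflTransGen (AbsRel 5) (normalTuple c d)
      (normalTuple (((c * d) ^ n)⁻¹ * c * (c * d) ^ n) (((c * d) ^ n)⁻¹ * d * (c * d) ^ n)) := by
  induction n with
  | zero => simpa using ReflTransGen.refl
  | succ n ih =>
    have h_step := reflTransGen_conj_right (((c * d) ^ n)⁻¹ * c * (c * d) ^ n)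
      (((c * d) ^ n)⁻¹ * d * (c * d) ^ n)
    rw [conj_mul_pow_mul_conj_mul_pow] at h_step
    simpa only [pow_succ, mul_inv_rev, mul_assoc] using ih.trans h_step

lemma exists_reflTransGen_pairRepresentative (hN : normalTuple c d ∈ NielsenSet 5)
    (hcd : IsOpposite c d) : ∃ r ∈ pairRepresentatives,
      ReflTransGen (AbsRel 5) (normalTuple c d) (normalTuple r.1 r.2) := by
  obtain ⟨h_sq, h_ne, -⟩ :=
    sq_eq_one_of_mem_doubleTranspositions _ (mem_doubleTranspositions_of_mem_nielsenSet hN 4)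
  change (a₀ * b₀ * c * d)⁻¹ * (a₀ * b₀ * c * d)⁻¹ = 1 at h_sq
  change (a₀ * b₀ * c * d)⁻¹ ≠ 1 at h_ne
  rw [← mul_inv_rev, inv_eq_one] at h_sq
  obtain ⟨r, hr, i, -, hi⟩ := exists_pow_mul_eq_mul_pow c
    (mem_doubleTranspositions_of_mem_nielsenSet hN 2) d
    (mem_doubleTranspositions_of_mem_nielsenSet hN 3) hcd h_sq (inv_ne_one.mp h_ne)
  have h_left := reflTransGen_conj_pow_left c d i
  have hN' := mem_nielsenSet_of_reflTransGen h_left hN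
  set c' := (a₀ * b₀) ^ i * c * ((a₀ * b₀) ^ i)⁻¹
  set d' := (a₀ * b₀) ^ i * d * ((a₀ * b₀) ^ i)⁻¹
  have h_prod : c' * d' = r.1 * r.2 := by
    rw [eq_mul_inv_of_mul_eq hi.symm]
    simp only [c', d', mul_assoc, inv_mul_cancel_left]
  have hc' : c' ∈ doubleTranspositions := mem_doubleTranspositions_of_mem_nielsenSet hN' 2
  have hd' : d' ∈ doubleTranspositions := mem_doubleTranspositions_of_mem_nielsenSet hN' 3
  have h_inverts : c' * (r.1 * r.2) = d' := by
    rw [← h_prod, ← mul_assoc, (sq_eq_one_of_mem_doubleTranspositions c' hc').1, one_mul]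
  obtain ⟨j, -, hj⟩ := exists_mul_pow_eq_pow_mul r hr c' hc'
    (h_inverts ▸ (sq_eq_one_of_mem_doubleTranspositions d' hd').1)
  have h_fst : ((c' * d') ^ j)⁻¹ * c' * (c' * d') ^ j = r.1 := by
    rw [h_prod, mul_assoc, hj, inv_mul_cancel_left]
  have h_snd : ((c' * d') ^ j)⁻¹ * d' * (c' * d') ^ j = r.2 := by
    rw [← mul_right_inj r.1, ← h_prod, ← h_fst]
    exact conj_mul_pow_mul_conj_mul_pow c' d' j
  exact ⟨r, hr, h_left.trans (h_fst ▸ h_snd ▸ reflTransGen_conj_pow_right c' d' j)⟩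

end NormalForm

section Generation

/-- The reference tuple `((0 1)(2 3), (1 2)(3 4), (1 2)(4 5), (0 1)(2 4), (2 5)(3 4))`. It lies in
the Nielsen class, and every other element of the class is reduced to it. -/
def baseTuple : Fin 5 → Perm (Fin 6) :=
  normalTuple (swap 1 2 * swap 4 5) (swap 0 1 * swap 2 4)

lemma exists_word_apply_eq : ∀ c d : Fin 6, c ≠ d → ∃ i < 5, ∃ j < 5, ∃ k < 2,
    let w := (baseTuple 0 * baseTuple 1) ^ i * baseTuple 2 ^ k * (baseTuple 0 * baseTuple 1) ^ j
    w 5 = c ∧ w 0 = d := by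
  decide +kernel

lemma isPretransitive_two_closure_baseTuple :
    MulAction.IsMultiplyPretransitive (Subgroup.closure (Set.range baseTuple)) (Fin 6) 2 := by
  rw [MulAction.is_two_pretransitive_iff]
  intro a b c d hab hcd
  have h_mem (i : Fin 5) : baseTuple i ∈ Subgroup.closure (Set.range baseTuple) :=
    Subgroup.subset_closure ⟨i, rfl⟩
  have exists_mem {a b : Fin 6} (hab : a ≠ b) :
      ∃ w : Subgroup.closure (Set.range baseTuple), w • 5 = a ∧ w • 0 = b := by
    obtain ⟨i, -, j, -, k, -, hw⟩ := exists_word_apply_eq a b hab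
    exact ⟨⟨_, mul_mem (mul_mem (pow_mem (mul_mem (h_mem 0) (h_mem 1)) i) (pow_mem (h_mem 2) k))
      (pow_mem (mul_mem (h_mem 0) (h_mem 1)) j)⟩, hw⟩
  obtain ⟨v, rfl, rfl⟩ := exists_mem hab
  obtain ⟨w, rfl, rfl⟩ := exists_mem hcd
  exact ⟨w * v⁻¹, by simp [mul_smul], by simp [mul_smul]⟩

lemma baseTuple_mem_doubleTranspositions : ∀ i, baseTuple i ∈ doubleTranspositions := by
  decide +kernel

lemma closure_range_baseTuple :
    Subgroup.closure (Set.range baseTuple) = alternatingGroup (Fin 6) := by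
  apply le_antisymm
  · rw [Subgroup.closure_le, Set.range_subset_iff]
    exact fun i => (mem_doubleTranspositions_iff.mp (baseTuple_mem_doubleTranspositions i)).1
  · refine alternatingGroup_le_of_isPreprimitive_of_isThreeCycle_mem
      (MulAction.isPreprimitive_of_is_two_pretransitive isPretransitive_two_closure_baseTuple)
      (g := swap 2 3 * swap 2 4)
      (isThreeCycle_swap_mul_swap_same (by decide) (by decide) (by decide)) ?_
    have h_three : swap 2 3 * swap 2 4 = baseTuple 0 * baseTuple 3 := by decide +kernel
    rw [h_three]
    exact mul_mem (Subgroup.subset_closure ⟨0, rfl⟩) (Subgroup.subset_closure ⟨3, rfl⟩)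

lemma baseTuple_mem_nielsenSet : baseTuple ∈ NielsenSet 5 :=
  ⟨fun i => (mem_doubleTranspositions_iff.mp (baseTuple_mem_doubleTranspositions i)).1,
    fun i => (mem_doubleTranspositions_iff.mp (baseTuple_mem_doubleTranspositions i)).2,
    by decide +kernel, closure_range_baseTuple⟩

lemma normalTuple_notMem_nielsenSet_of_stabilizer :
    normalTuple (swap 1 2 * swap 3 4) (swap 0 2 * swap 1 3) ∉ NielsenSet 5 := by
  intro hN
  have h_le := alternatingGroup_le_of_mem_nielsenSet hN
    (H := MulAction.stabilizer (Perm (Fin 6)) (5 : Fin 6)) (by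
      simp only [MulAction.mem_stabilizer_iff]
      decide +kernel)
  have h_mem : swap 0 1 * swap 4 5 ∈ alternatingGroup (Fin 6) := by
    rw [Equiv.Perm.mem_alternatingGroup]
    decide
  exact absurd (h_le h_mem) (by decide)

/-- A synthematic total: five triple transpositions sharing no transposition. Its normalizer is
an exotic subgroup `S₅` of `S₆`, the image of a point stabilizer under an outer automorphism. -/
def synthematicTotal : List (Perm (Fin 6)) :=
  [swap 0 5 * swap 1 2 * swap 3 4, swap 0 2 * swap 1 4 * swap 3 5, swap 0 3 * swap 1 5 * swap 2 4,
   swap 0 1 * swap 2 3 * swap 4 5, swap 0 4 * swap 1 3 * swap 2 5]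

lemma normalTuple_notMem_nielsenSet_of_synthematicTotal :
    normalTuple (swap 1 2 * swap 3 4) (swap 2 3 * swap 4 5) ∉ NielsenSet 5 := by
  intro hN
  have h_normalizes : ∀ i, ∀ t ∈ synthematicTotal,
      normalTuple (swap 1 2 * swap 3 4) (swap 2 3 * swap 4 5) i * t *
        (normalTuple (swap 1 2 * swap 3 4) (swap 2 3 * swap 4 5) i)⁻¹ ∈ synthematicTotal := by
    decide +kernel
  have h_le := alternatingGroup_le_of_mem_nielsenSet hN
    (H := Subgroup.normalizer {t | t ∈ synthematicTotal}) fun i =>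
      Subgroup.mem_normalizer_fintype (h_normalizes i)
  have h_mem : swap 0 1 * swap 2 4 ∈ alternatingGroup (Fin 6) := by
    rw [Equiv.Perm.mem_alternatingGroup]
    decide
  have h_not_normalizes : ¬ ∀ t ∈ synthematicTotal,
      swap 0 1 * swap 2 4 * t * (swap 0 1 * swap 2 4)⁻¹ ∈ synthematicTotal := by
    decide +kernel
  exact h_not_normalizes fun t => (h_le h_mem t).mp

lemma reflTransGen_normalTuple_baseTuple :
    ReflTransGen (AbsRel 5) (normalTuple (swap 1 2 * swap 3 5) (swap 0 1 * swap 2 5)) baseTuple :=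
  .head (.inl (hurwitzMove_braid _ 1 (by lia))) (.single (.inr ⟨swap 4 5, by decide +kernel⟩))

lemma reflTransGen_baseTuple_of_isOpposite {c d : Perm (Fin 6)}
    (hN : normalTuple c d ∈ NielsenSet 5) (hcd : IsOpposite c d) :
    ReflTransGen (AbsRel 5) (normalTuple c d) baseTuple := by
  obtain ⟨r, hr, h_red⟩ := exists_reflTransGen_pairRepresentative hN hcd
  have hN' := mem_nielsenSet_of_reflTransGen h_red hN
  simp only [pairRepresentatives, List.mem_cons, List.not_mem_nil, or_false] at hr
  obtain rfl | rfl | rfl | rfl := hr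
  · exact h_red.trans reflTransGen_normalTuple_baseTuple
  · exact h_red
  · exact absurd hN' normalTuple_notMem_nielsenSet_of_stabilizer
  · exact absurd hN' normalTuple_notMem_nielsenSet_of_synthematicTotal

end Generation

section OppositePairs

variable {g : Fin 5 → Perm (Fin 6)}

lemma exists_isOpposite_of_apply_eq (hg : g ∈ NielsenSet 5) (h₀ : g 0 = a₀)
    (h₁ : g 1 ∈ centralizerRepresentatives) : ∃ i j, i < j ∧ IsOpposite (g i) (g j) := by
  by_contra! h_not
  have h_mem := mem_doubleTranspositions_of_mem_nielsenSet hg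
  have h_four : g 4 = a₀ * g 1 * g 2 * g 3 := h₀ ▸ apply_four_eq_of_mem_nielsenSet hg
  obtain ⟨h_sq, h_ne, -⟩ := sq_eq_one_of_mem_doubleTranspositions _ (h_mem 4)
  have h_not₀ (j : Fin 5) (hj : 0 < j) : ¬ IsOpposite a₀ (g j) := h₀ ▸ h_not 0 j hj
  have h_not₄ : ∀ x ∈ [a₀, g 1, g 2, g 3], ¬ IsOpposite x (g 4) := by
    simp [h_not, h_not₀]
  rw [h_four] at h_sq h_ne h_not₄
  obtain ⟨t, ht, h_comm⟩ := exists_mem_commutingOddInvolutions (g 1) h₁ (h_not₀ 1 (by decide))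
    (g 2) (h_mem 2) (h_not₀ 2 (by decide)) (h_not 1 2 (by decide))
    (g 3) (h_mem 3) (h_not₀ 3 (by decide)) (h_not 1 3 (by decide)) (h_not 2 3 (by decide))
    h_sq h_ne h_not₄
  have h_centralizes : ∀ x ∈ [a₀, g 1, g 2, g 3], x ∈ Subgroup.centralizer {t} := fun x hx =>
    Subgroup.mem_centralizer_singleton_iff.mpr (h_comm x hx)
  have h_le := alternatingGroup_le_of_mem_nielsenSet hg (H := Subgroup.centralizer {t}) fun i => by
    simp only [List.forall_mem_cons] at h_centralizes
    obtain ⟨c₀, c₁, c₂, c₃, -⟩ := h_centralizes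
    fin_cases i
    exacts [h₀ ▸ c₀, c₁, c₂, c₃, h_four ▸ mul_mem (mul_mem (mul_mem c₀ c₁) c₂) c₃]
  exact mul_ne_mul_of_mem_commutingOddInvolutions t ht
    (Subgroup.mem_centralizer_singleton_iff.mp (h_le a₀_mul_b₀_mem_alternatingGroup))

lemma exists_isOpposite (hg : g ∈ NielsenSet 5) : ∃ i j, i < j ∧ IsOpposite (g i) (g j) := by
  have h_mem := mem_doubleTranspositions_of_mem_nielsenSet hg
  obtain ⟨s, h₀, h₁⟩ := exists_conj_eq_a₀_and_mem (h_mem 0) (h_mem 1)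
  obtain ⟨i, j, hij, h_opp⟩ :=
    exists_isOpposite_of_apply_eq (AbsRel.mem_nielsenSet (.inr ⟨s, rfl⟩) hg) h₀ h₁
  exact ⟨i, j, hij, h_opp.of_conj⟩

lemma exists_reflTransGen_apply_zero_one (hg : g ∈ NielsenSet 5) :
    ∃ h, ReflTransGen (AbsRel 5) g h ∧ h 0 = a₀ ∧ h 1 = b₀ := by
  obtain ⟨i, j, hij, h_opp⟩ := exists_isOpposite hg
  obtain ⟨h, hgh, hi, hj, -⟩ :=
    exists_reflTransGen_hurwitzMove_apply_eq_pair g (Nat.zero_le i) hij j.isLt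
  have h_mem := mem_doubleTranspositions_of_mem_nielsenSet hg
  obtain ⟨s, h₀, h₁⟩ := h_opp.exists_conj_eq (h_mem i) (h_mem j)
  exact ⟨fun l => s⁻¹ * h l * s, (ReflTransGen.mono (fun _ _ => .inl) _ _ hgh).tail (.inr ⟨s, rfl⟩),
    by rwa [← hi] at h₀, by rwa [← hj] at h₁⟩

lemma reflTransGen_baseTuple_of_pair (hg : g ∈ NielsenSet 5) (h₀ : g 0 = a₀) (h₁ : g 1 = b₀)
    {i j : Fin 5} (hi : 2 ≤ i) (hij : i < j) (h_opp : IsOpposite (g i) (g j)) :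
    ReflTransGen (AbsRel 5) g baseTuple := by
  obtain ⟨h, hgh, h₂, h₃, h_eq⟩ :=
    exists_reflTransGen_hurwitzMove_apply_eq_pair g (m := 2) (i := i) hi hij j.isLt
  have hgh' : ReflTransGen (AbsRel 5) g h := ReflTransGen.mono (fun _ _ => .inl) _ _ hgh
  have h_normal := eq_normalTuple (mem_nielsenSet_of_reflTransGen hgh' hg)
    ((h_eq 0 (by decide)).trans h₀) ((h_eq 1 (by decide)).trans h₁)
  have hN := mem_nielsenSet_of_reflTransGen hgh' hg
  rw [h_normal] at hgh' hN
  exact hgh'.trans (reflTransGen_baseTuple_of_isOpposite hN (by rwa [← h₂, ← h₃] at h_opp))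

lemma reflTransGen_baseTuple_of_apply_zero_one (hg : g ∈ NielsenSet 5) (h₀ : g 0 = a₀)
    (h₁ : g 1 = b₀) : ReflTransGen (AbsRel 5) g baseTuple := by
  have h_mem := mem_doubleTranspositions_of_mem_nielsenSet hg
  have h_four : g 4 = a₀ * b₀ * g 2 * g 3 := h₀ ▸ h₁ ▸ apply_four_eq_of_mem_nielsenSet hg
  have h_opp := exists_isOpposite_of_prod_involution (g 2) (h_mem 2) (g 3) (h_mem 3)
    (h_four ▸ (sq_eq_one_of_mem_doubleTranspositions _ (h_mem 4)).1)
  rw [← h_four] at h_opp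
  obtain h₂₃ | h₂₄ | h₃₄ | h₃₄' := h_opp
  · exact reflTransGen_baseTuple_of_pair hg h₀ h₁ le_rfl (by decide) h₂₃
  · exact reflTransGen_baseTuple_of_pair hg h₀ h₁ le_rfl (by decide) h₂₄
  · exact reflTransGen_baseTuple_of_pair hg h₀ h₁ (by decide) (by decide) h₃₄
  · have h_braid : AbsRel 5 g (braid g 2 (by lia)) := .inl (hurwitzMove_braid g 2 _)
    exact .head h_braid (reflTransGen_baseTuple_of_pair (i := 3) (j := 4)
      (h_braid.mem_nielsenSet hg) h₀ h₁ (by decide) (by decide) h₃₄')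

theorem reflTransGen_baseTuple (hg : g ∈ NielsenSet 5) : ReflTransGen (AbsRel 5) g baseTuple := by
  obtain ⟨h, hgh, h₀, h₁⟩ := exists_reflTransGen_apply_zero_one hg
  exact hgh.trans
    (reflTransGen_baseTuple_of_apply_zero_one (mem_nielsenSet_of_reflTransGen hgh hg) h₀ h₁)

end OppositePairs

/-- `Ni(A₆, C_{2×2}^5)` is nonempty and any two of its elements are related by
the equivalence relation generated by Hurwitz moves and simultaneous
`S₆`-conjugation; the corresponding quotient has exactly one class. -/
theorem stmt_1 :
    (NielsenSet 5).Nonempty ∧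
    (∀ g ∈ NielsenSet 5, ∀ h ∈ NielsenSet 5, Relation.EqvGen (AbsRel 5) g h) ∧
    Nat.card (Quotient ((Relation.EqvGen.setoid (AbsRel 5)).comap
      (Subtype.val : ↥(NielsenSet 5) → (Fin 5 → Equiv.Perm (Fin 6))))) = 1 := by
  have h_equiv : ∀ g ∈ NielsenSet 5, ∀ h ∈ NielsenSet 5, EqvGen (AbsRel 5) g h := by
    have h_base {g} (hg : g ∈ NielsenSet 5) : EqvGen (AbsRel 5) g baseTuple :=
      EqvGen.reflTransGen_le_eqvGen _ _ _ (reflTransGen_baseTuple hg)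
    exact fun g hg h hh => (h_base hg).trans _ _ _ ((h_base hh).symm)
  refine ⟨⟨baseTuple, baseTuple_mem_nielsenSet⟩, h_equiv, Nat.card_eq_one_iff_unique.mpr ⟨?_, ?_⟩⟩
  · refine ⟨fun x y => ?_⟩
    induction x, y using Quotient.ind₂ with
    | _ g h => exact Quotient.sound (h_equiv g g.2 h h.2)
  · exact ⟨⟦⟨baseTuple, baseTuple_mem_nielsenSet⟩⟧⟩
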